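/- Let N ≥ 4. There do not exist a unitary U ∈ SU(2^N), matrices P₁, P₂, P₃ ∈ SU(2), functions f₁, f₂, f₃ : Fin 2^N → {0,1}, and for every s ∈ Fin 2^N unitaries R_k(s) ∈ U(2) for 4 ≤ k ≤ N together with nonzero scalars c_s ∈ ℂ, such that (P₁^{f₁(s)} ⊗ P₂^{f₂(s)} ⊗ P₃^{f₃(s)} ⊗ R₄(s) ⊗ ⋯ ⊗ R_N(s)) Uᵀ|s⟩ = c_s |W_N⟩ for all s. Consequently, in any one-way LOCC allocation of the N-qubit W state through a central hub, at most two end nodes can receive only one classical bit, so the total communication cost is at least 2N − 2 classical bits. -/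

import Mathlib

/-!
STATEMENT 18: Let N ≥ 4.  There do not exist a unitary U ∈ SU(2^N), matrices
P₁, P₂, P₃ ∈ SU(2), functions f₁, f₂, f₃ : basis labels → {0,1}, and for every
label s unitaries R_k(s) ∈ U(2) for 4 ≤ k ≤ N together with nonzero scalars
c_s ∈ ℂ, such that
(P₁^{f₁(s)} ⊗ P₂^{f₂(s)} ⊗ P₃^{f₃(s)} ⊗ R₄(s) ⊗ ⋯ ⊗ R_N(s)) Uᵀ|s⟩ = c_s |W_N⟩
for all s.  (Hence at most two end nodes can receive only one classical bit,
so the total communication cost is at least 2N − 2 classical bits.)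

We represent (ℂ²)^{⊗N} ≅ ℂ^{2^N} by indexing coordinates with functions
`Fin N → Fin 2` (position k of the statement corresponds to index k−1 here);
the tensor factor at index k of the recovery operator is encoded by a family
`R : Fin N → Matrix (Fin 2) (Fin 2) ℂ` whose first three entries are the
prescribed powers of P₁, P₂, P₃ and whose remaining entries are unitary.
-/

open Matrix

noncomputable section

/-- Computational basis vector `|s⟩` of (ℂ²)^{⊗N}. -/
def ketN {N : ℕ} (s : Fin N → Fin 2) : (Fin N → Fin 2) → ℂ :=
  fun t => if t = s then 1 else 0

/-- N-fold Kronecker (tensor) product of 2×2 matrices. -/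
def tpow {N : ℕ} (M : Fin N → Matrix (Fin 2) (Fin 2) ℂ) :
    Matrix (Fin N → Fin 2) (Fin N → Fin 2) ℂ :=
  Matrix.of fun i j => ∏ k, M k (i k) (j k)

/-- The N-qubit W state. -/
def wState (N : ℕ) : (Fin N → Fin 2) → ℂ :=
  (Real.sqrt N : ℂ)⁻¹ • ∑ k : Fin N, ketN (fun j => if j = k then 1 else 0)

/-!
Summing over `s` the expectations of a local observable in the orthonormal basis `Uᵀ|s⟩` gives its
trace (`sum_expect`). Since each basis vector is, up to a scalar, a local unitary image of `|W_N⟩`,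
every observable `A ⊗ B` on two qubits with `A` traceless yields a vanishing weighted sum of
expectations in the two-qubit marginal of `|W_N⟩`, conjugated by the corrections (`sum_margin`).
The weights `|c_s|²` are merely positive; their actual value is irrelevant.

* With `B = 1`: the one-qubit marginal of `|W_N⟩` has a nonzero Bloch vector for `N ≠ 2`, and the
  weighted average of it and its image under `P` vanishes. Hence `P` reverses it, that is,
  `P = (0, q; -q̄, 0)` with `|q| = 1` (`flip_of_margin`).
* With `A`, `B` the matrix units `|0⟩⟨1|`, `|1⟩⟨0|`: the coherence between `|01⟩` and `|10⟩` in the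
  marginal of `|W_N⟩` must cancel out between the corrections, which forces `q² = -r²` for any two
  such qubits with phases `q`, `r` (`phases_opposite`).

Three nonzero numbers `q₁²`, `q₂²`, `q₃²` cannot be pairwise opposite.
-/

theorem tpow_mul {N : ℕ} (A B : Fin N → Matrix (Fin 2) (Fin 2) ℂ) :
    tpow A * tpow B = tpow (fun k => A k * B k) := by
  ext i j
  simp only [tpow, Matrix.mul_apply, Matrix.of_apply, Finset.prod_univ_sum,
    Fintype.piFinset_univ, Finset.prod_mul_distrib]

theorem tpow_conjTranspose {N : ℕ} (A : Fin N → Matrix (Fin 2) (Fin 2) ℂ) :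
    (tpow A)ᴴ = tpow (fun k => (A k)ᴴ) := by
  ext i j
  simp [tpow, Matrix.conjTranspose_apply]

theorem tpow_one {N : ℕ} : tpow (fun _ : Fin N => (1 : Matrix (Fin 2) (Fin 2) ℂ)) = 1 := by
  ext i j
  simp only [tpow, Matrix.of_apply, Matrix.one_apply, Finset.prod_ite_zero, Finset.mem_univ,
    true_imp_iff, Finset.prod_const_one, funext_iff]

theorem trace_tpow {N : ℕ} (A : Fin N → Matrix (Fin 2) (Fin 2) ℂ) :
    (tpow A).trace = ∏ k, (A k).trace := by
  simp only [tpow, Matrix.trace, Matrix.diag, Matrix.of_apply, Finset.prod_univ_sum,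
    Fintype.piFinset_univ]

/-- The unnormalised W state `∑ₖ |eₖ⟩`. -/
def wVec (N : ℕ) : (Fin N → Fin 2) → ℂ :=
  ∑ k : Fin N, ketN (fun j => if j = k then 1 else 0)

/-- The operator acting as `A` on qubit `i`, as `B` on qubit `j` and trivially elsewhere
(meaningful for `i ≠ j`), as a family of tensor factors. -/
def twoSite {N : ℕ} (i j : Fin N) (A B : Matrix (Fin 2) (Fin 2) ℂ) :
    Fin N → Matrix (Fin 2) (Fin 2) ℂ :=
  fun m => if m = i then A else if m = j then B else 1

/-- `N` times the expectation of `A ⊗ B` in the two-qubit marginal of `|W_N⟩`. -/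
def margin (N : ℕ) (A B : Matrix (Fin 2) (Fin 2) ℂ) : ℂ :=
  ((N : ℂ) - 2) * (A 0 0 * B 0 0) + A 1 1 * B 0 0 + A 0 0 * B 1 1 + A 1 0 * B 0 1 + A 0 1 * B 1 0

theorem prod_twoSite {N : ℕ} {i j : Fin N} (hij : i ≠ j) (A B : Matrix (Fin 2) (Fin 2) ℂ)
    (x y : Fin N → Fin 2) :
    ∏ m, twoSite i j A B m (x m) (y m) =
      A (x i) (y i) * B (x j) (y j) * if ∀ m, m ≠ i → m ≠ j → x m = y m then 1 else 0 := by
  rw [← Finset.mul_prod_erase _ _ (Finset.mem_univ i),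
    ← Finset.mul_prod_erase _ _ (Finset.mem_erase.2 ⟨hij.symm, Finset.mem_univ j⟩), ← mul_assoc]
  congr 1
  · simp [twoSite, hij.symm]
  · rw [Finset.prod_congr rfl (g := fun m => if x m = y m then (1 : ℂ) else 0)]
    · rw [Finset.prod_ite_zero]
      simp only [Finset.mem_erase, Finset.mem_univ, and_true, Finset.prod_const_one]
      congr 1
      simp only [eq_iff_iff]
      exact ⟨fun h m h1 h2 => h m ⟨h2, h1⟩, fun h m h1 => h m h1.2 h1.1⟩
    · intro m hm
      simp only [Finset.mem_erase, Finset.mem_univ, and_true] at hm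
      simp [twoSite, hm.1, hm.2, Matrix.one_apply]

/-- The marginal formula: only pairs `k, l` of excitation sites with `k = l` or
`{k, l} = {i, j}` contribute to `⟨W|A ⊗ B|W⟩`. -/
theorem expect_twoSite {N : ℕ} {i j : Fin N} (hij : i ≠ j) (A B : Matrix (Fin 2) (Fin 2) ℂ) :
    star (wVec N) ⬝ᵥ (tpow (twoSite i j A B)).mulVec (wVec N) = margin N A B := by
  have h1 : star (wVec N) ⬝ᵥ (tpow (twoSite i j A B)).mulVec (wVec N) =
      ∑ k : Fin N, ∑ l : Fin N, ∏ m, twoSite i j A B m (if m = k then 1 else 0)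
        (if m = l then 1 else 0) := by
    have hk : ∀ x : Fin N → Fin 2, star (ketN x) = Pi.single x (1 : ℂ) := by
      intro x; ext t; by_cases h : t = x <;> simp [ketN, h]
    have hk' : ∀ x : Fin N → Fin 2, ketN x = Pi.single x (1 : ℂ) := by
      intro x; ext t; by_cases h : t = x <;> simp [ketN, h]
    simp only [wVec, star_sum, hk, Matrix.mulVec_sum, dotProduct_sum, sum_dotProduct]
    rw [Finset.sum_comm]
    refine Finset.sum_congr rfl fun k _ => Finset.sum_congr rfl fun l _ => ?_
    rw [hk']
    simp [tpow]
  have h2 : ∀ k l : Fin N, (∏ m, twoSite i j A B m (if m = k then 1 else 0)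
        (if m = l then 1 else 0)) =
      (if k = l then A 0 0 * B 0 0 else 0)
      + (if k = i then if l = i then A 1 1 * B 0 0 - A 0 0 * B 0 0 else 0 else 0)
      + (if k = j then if l = j then A 0 0 * B 1 1 - A 0 0 * B 0 0 else 0 else 0)
      + (if k = i then if l = j then A 1 0 * B 0 1 else 0 else 0)
      + (if k = j then if l = i then A 0 1 * B 1 0 else 0 else 0) := by
    intro k l
    rw [prod_twoSite hij]
    have hc : (∀ m, m ≠ i → m ≠ j → (if m = k then (1 : Fin 2) else 0) = if m = l then 1 else 0)
        ↔ (k = l ∨ ((k = i ∨ k = j) ∧ (l = i ∨ l = j))) := by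
      constructor
      · intro h
        have hk := h k
        have hl := h l
        by_contra hh
        grind
      · grind
    rw [if_congr hc rfl rfl]
    by_cases hki : k = i
    · subst hki
      by_cases hlj : l = j
      · subst hlj; simp [hij, hij.symm]
      · by_cases hl : l = k
        · subst hl; simp [hij, hij.symm]
        · simp [hlj, hl, hij, Ne.symm hl]
    · by_cases hkj : k = j
      · subst hkj
        by_cases hli : l = i
        · subst hli; simp [hij, hij.symm]
        · by_cases hl : l = k
          · subst hl; simp [hij, hij.symm]
          · simp [hli, hl, hij.symm, Ne.symm hl]
      · by_cases hl : k = l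
        · subst hl; simp [hki, hkj, Ne.symm hki, Ne.symm hkj]
        · simp [hki, hkj, hl]
  rw [h1]
  simp only [h2, Finset.sum_add_distrib, Finset.sum_ite_eq, Finset.sum_ite_eq', Finset.mem_univ,
    if_true, Finset.sum_const, Finset.card_univ, Fintype.card_fin, nsmul_eq_mul, margin,
    Finset.sum_ite_irrel, mul_zero]
  ring

/-- Completeness relation: the rows of a unitary matrix form an orthonormal basis, so the
expectations of `T` in them add up to the trace. -/
theorem sum_expect {n : Type*} [Fintype n] [DecidableEq n] (U T : Matrix n n ℂ)
    (hU : U ∈ Matrix.unitaryGroup n ℂ) :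
    ∑ s, star (U s) ⬝ᵥ T.mulVec (U s) = T.trace := by
  have h : Uᴴ * U = 1 := Matrix.mem_unitaryGroup_iff'.1 hU
  have h2 : ∑ s, star (U s) ⬝ᵥ T.mulVec (U s) = (T * (Uᴴ * U)ᵀ).trace := by
    simp only [Matrix.trace, Matrix.diag, Matrix.mul_apply, dotProduct, Matrix.mulVec,
      Matrix.transpose_apply, Matrix.conjTranspose_apply, Pi.star_apply, Finset.mul_sum]
    rw [Finset.sum_comm]
    refine Finset.sum_congr rfl fun t _ => ?_
    rw [Finset.sum_comm]
    refine Finset.sum_congr rfl fun t' _ => Finset.sum_congr rfl fun s _ => ?_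
    ring
  rw [h2, h]; simp

/-- Transport of an expectation along an isometry `R` with `R v = c w`. -/
theorem expect_pullback {n : Type*} [Fintype n] [DecidableEq n] (R T : Matrix n n ℂ)
    (hR : Rᴴ * R = 1) (v w : n → ℂ) (c : ℂ) (h : R.mulVec v = c • w) :
    star v ⬝ᵥ T.mulVec v = (star c * c) * (star w ⬝ᵥ (R * T * Rᴴ).mulVec w) := by
  have hv : v = Rᴴ.mulVec (c • w) := by rw [← h, Matrix.mulVec_mulVec, hR, Matrix.one_mulVec]
  rw [hv, Matrix.star_mulVec, Matrix.conjTranspose_conjTranspose, ← Matrix.dotProduct_mulVec,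
    Matrix.mulVec_mulVec, Matrix.mulVec_mulVec, Matrix.mulVec_smul, star_smul, smul_dotProduct,
    dotProduct_smul]
  simp only [smul_eq_mul]; ring

/-- If unitary local operations `R s` take the rows of the unitary `U` to multiples of the W state,
a two-site observable whose first factor is traceless has vanishing total weighted marginal. -/
theorem sum_margin {N : ℕ} (hN : 4 ≤ N) (U : Matrix (Fin N → Fin 2) (Fin N → Fin 2) ℂ)
    (hU : U ∈ Matrix.unitaryGroup (Fin N → Fin 2) ℂ)
    (R : (Fin N → Fin 2) → Fin N → Matrix (Fin 2) (Fin 2) ℂ)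
    (hR : ∀ s k, R s k ∈ Matrix.unitaryGroup (Fin 2) ℂ) (c : (Fin N → Fin 2) → ℂ)
    (h : ∀ s, (tpow (R s)).mulVec (Uᵀ.mulVec (ketN s)) = c s • wState N)
    {i j : Fin N} (hij : i ≠ j) (A B : Matrix (Fin 2) (Fin 2) ℂ) (hA : A.trace = 0) :
    ∑ s, ((‖c s‖ ^ 2 : ℝ) : ℂ) * margin N (R s i * A * (R s i)ᴴ) (R s j * B * (R s j)ᴴ) = 0 := by
  have hrow : ∀ s, Uᵀ.mulVec (ketN s) = U s := by
    intro s; ext t; simp [Matrix.mulVec, dotProduct, ketN]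
  have htr : (tpow (twoSite i j A B)).trace = 0 := by
    rw [trace_tpow]
    exact Finset.prod_eq_zero (Finset.mem_univ i) (by simp [twoSite, hA])
  have hN0 : (Real.sqrt N : ℂ) ≠ 0 := by
    have : (0 : ℝ) < N := by exact_mod_cast (by omega : 0 < N)
    exact_mod_cast (Real.sqrt_pos.2 this).ne'
  set r : ℂ := (Real.sqrt N : ℂ)⁻¹ with hr
  have hr0 : star r * r ≠ 0 := mul_ne_zero (star_ne_zero.2 (inv_ne_zero hN0)) (inv_ne_zero hN0)
  have hs : ∀ s, star (U s) ⬝ᵥ (tpow (twoSite i j A B)).mulVec (U s) = (star r * r) *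
      (((‖c s‖ ^ 2 : ℝ) : ℂ) * margin N (R s i * A * (R s i)ᴴ) (R s j * B * (R s j)ᴴ)) := by
    intro s
    have hR1 : (tpow (R s))ᴴ * tpow (R s) = 1 := by
      rw [tpow_conjTranspose, tpow_mul, ← tpow_one]
      congr 1; ext1 k; exact Matrix.mem_unitaryGroup_iff'.1 (hR s k)
    have hh : (tpow (R s)).mulVec (U s) = (c s * r) • wVec N := by
      rw [← hrow, h s, mul_smul]; rfl
    rw [expect_pullback _ _ hR1 _ _ _ hh, tpow_conjTranspose, tpow_mul, tpow_mul]
    have hT : (fun k => R s k * twoSite i j A B k * (R s k)ᴴ) =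
        twoSite i j (R s i * A * (R s i)ᴴ) (R s j * B * (R s j)ᴴ) := by
      ext1 k
      by_cases hki : k = i
      · subst hki; simp [twoSite]
      · by_cases hkj : k = j
        · subst hkj; simp [twoSite, hki]
        · simp only [twoSite, hki, hkj, if_false, mul_one]
          exact Matrix.mem_unitaryGroup_iff.1 (hR s k)
    have hcc : star (c s) * c s = ((‖c s‖ ^ 2 : ℝ) : ℂ) := by
      have := Complex.conj_mul' (c s)
      simpa using this
    rw [hT, expect_twoSite hij, ← hcc, star_mul']
    ring
  have := sum_expect U (tpow (twoSite i j A B)) hU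
  rw [htr] at this
  simp only [hs, ← Finset.mul_sum] at this
  exact (mul_eq_zero.1 this).resolve_left hr0

/-- A weighted sum of two unimodular numbers, with nonnegative real weights that do not all
vanish, can be zero only if the two numbers are opposite. -/
theorem opposite_of_sum {ι : Type*} [Fintype ι] [Nonempty ι] (w : ι → ℝ) (hw : ∀ s, 0 < w s)
    (f : ι → Fin 2) (u v : ℂ) (hu : ‖u‖ = 1) (hv : ‖v‖ = 1)
    (h : ∑ s, (w s : ℂ) * (if f s = 0 then u else v) = 0) : u = -v := by
  set a : ℝ := ∑ s, if f s = 0 then w s else 0 with ha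
  set b : ℝ := ∑ s, if f s = 0 then 0 else w s with hb
  have hab : 0 < a + b := by
    rw [ha, hb, ← Finset.sum_add_distrib]
    refine Finset.sum_pos (fun s _ => ?_) Finset.univ_nonempty
    split_ifs <;> simp [hw s]
  have ha0 : 0 ≤ a := Finset.sum_nonneg fun s _ => by split_ifs; exacts [(hw s).le, le_rfl]
  have hb0 : 0 ≤ b := Finset.sum_nonneg fun s _ => by split_ifs; exacts [le_rfl, (hw s).le]
  have hsum : (a : ℂ) * u + b * v = 0 := by
    rw [← h, ha, hb]
    push_cast
    rw [Finset.sum_mul, Finset.sum_mul, ← Finset.sum_add_distrib]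
    refine Finset.sum_congr rfl fun s _ => ?_
    split_ifs <;> simp
  have hn : a = b := by
    have := congrArg norm (eq_neg_of_add_eq_zero_left hsum)
    simpa [hu, hv, abs_of_nonneg ha0, abs_of_nonneg hb0] using this
  have ha1 : (a : ℂ) ≠ 0 := by
    have : a ≠ 0 := by intro h0; linarith
    exact_mod_cast this
  rw [← hn, ← mul_add] at hsum
  exact eq_neg_of_add_eq_zero_left ((mul_eq_zero.1 hsum).resolve_left ha1)

/-- A matrix in `SU(2)` has the form `(p, q; -q̄, p̄)` with `|p|² + |q|² = 1`. -/
theorem su2_form (P : Matrix (Fin 2) (Fin 2) ℂ) (hP : P ∈ Matrix.specialUnitaryGroup (Fin 2) ℂ) :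
    ∃ p q : ℂ, P = !![p, q; -star q, star p] ∧ p * star p + q * star q = 1 := by
  obtain ⟨h1, h2⟩ := Matrix.mem_specialUnitaryGroup_iff.1 hP
  have h3 : P * Pᴴ = 1 := Matrix.mem_unitaryGroup_iff.1 h1
  -- the adjugate is the inverse, hence the adjoint
  have h4 : Pᴴ = P.adjugate := by
    have h5 : P.adjugate * P = 1 := by rw [Matrix.adjugate_mul, h2, one_smul]
    calc Pᴴ = (P.adjugate * P) * Pᴴ := by rw [h5, one_mul]
      _ = P.adjugate := by rw [mul_assoc, h3, mul_one]
  rw [Matrix.adjugate_fin_two] at h4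
  have e0 := congrFun (congrFun h4 0) 0
  have e1 := congrFun (congrFun h4 1) 0
  simp [Matrix.conjTranspose_apply] at e0 e1
  refine ⟨P 0 0, P 0 1, ?_, ?_⟩
  · ext a b
    fin_cases a <;> fin_cases b <;> simp [e0, e1]
  · have := congrFun (congrFun h3 0) 0
    simpa [Matrix.mul_apply, Fin.sum_univ_two, Matrix.conjTranspose_apply] using this

/-- Single-qubit condition: if the marginals of all traceless one-qubit observables cancel, a
two-valued correction `P ^ f` must have `P` a bit flip up to phases. -/
theorem flip_of_margin {ι : Type*} [Fintype ι] [Nonempty ι] {N : ℕ} (hN : 4 ≤ N) (w : ι → ℝ)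
    (hw : ∀ s, 0 < w s) (P : Matrix (Fin 2) (Fin 2) ℂ)
    (hP : P ∈ Matrix.specialUnitaryGroup (Fin 2) ℂ) (f : ι → Fin 2)
    (h : ∀ A : Matrix (Fin 2) (Fin 2) ℂ, A.trace = 0 →
      ∑ s, (w s : ℂ) * margin N (P ^ (f s : ℕ) * A * (P ^ (f s : ℕ))ᴴ) 1 = 0) :
    ∃ q : ℂ, P = !![0, q; -star q, 0] ∧ q * star q = 1 := by
  obtain ⟨p, q, rfl, hpq⟩ := su2_form P hP
  have hN2 : ((N : ℂ) - 2) ≠ 0 := by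
    have : (N : ℂ) ≠ 2 := by exact_mod_cast (by omega : N ≠ 2)
    exact sub_ne_zero.2 this
  set a : ℝ := ∑ s, if f s = 0 then w s else 0 with ha
  set b : ℝ := ∑ s, if f s = 0 then 0 else w s with hb
  have hab : 0 < a + b := by
    rw [ha, hb, ← Finset.sum_add_distrib]
    refine Finset.sum_pos (fun s _ => ?_) Finset.univ_nonempty
    split_ifs <;> simp [hw s]
  -- traceless upper triangular observables suffice: `x` probes `|p|² - |q|²`, `y` probes `p q̄`
  have hm : ∀ x y : ℂ, ∀ s, margin N (!![p, q; -star q, star p] ^ (f s : ℕ) * !![x, y; 0, -x] *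
      (!![p, q; -star q, star p] ^ (f s : ℕ))ᴴ) 1 = ((N : ℂ) - 2) *
        if f s = 0 then x else x * (p * star p - q * star q) + y * (p * star q) := by
    intro x y s
    have hf : f s = 0 ∨ f s = 1 := by omega
    rcases hf with hf | hf
    · simp [hf, margin]
    · rw [hf]
      simp [margin, Matrix.mul_apply, Fin.sum_univ_two, Matrix.conjTranspose_apply]
      ring
  have key : ∀ x y : ℂ,
      (a : ℂ) * x + b * (x * (p * star p - q * star q) + y * (p * star q)) = 0 := by
    intro x y
    have h0 := h !![x, y; 0, -x] (by simp [Matrix.trace_fin_two])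
    have h1 : ((N : ℂ) - 2) * ((a : ℂ) * x +
        b * (x * (p * star p - q * star q) + y * (p * star q))) = 0 := by
      rw [← h0, ha, hb]
      push_cast
      rw [Finset.sum_mul, Finset.sum_mul, ← Finset.sum_add_distrib, Finset.mul_sum]
      refine Finset.sum_congr rfl fun s _ => ?_
      rw [hm x y s]
      split_ifs <;> simp <;> ring
    exact (mul_eq_zero.1 h1).resolve_left hN2
  have k1 := key 1 0
  have k2 := key 0 1
  simp only [mul_one, one_mul, zero_mul, mul_zero, add_zero, zero_add] at k1 k2
  have hab' : (a : ℂ) + b ≠ 0 := by exact_mod_cast hab.ne'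
  have hp : p = 0 := by
    by_contra hp
    rcases mul_eq_zero.1 k2 with hb' | hq
    · rw [hb'] at k1 hab'
      simp at k1 hab'
      exact hab' k1
    · have hq0 : q = 0 := star_eq_zero.1 ((mul_eq_zero.1 hq).resolve_left hp)
      apply hab'
      rw [hq0] at k1 hpq
      simp only [zero_mul, add_zero, sub_zero] at k1 hpq
      rw [hpq, mul_one] at k1
      exact k1
  subst hp
  exact ⟨q, by simp, by simpa using hpq⟩

/-- Two-qubit condition: for two bit flips with phases `q`, `r`, the vanishing of the off-diagonal
two-qubit marginals forces `q² = -r²`. -/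
theorem phases_opposite {ι : Type*} [Fintype ι] [Nonempty ι] {N : ℕ} (w : ι → ℝ)
    (hw : ∀ s, 0 < w s) (q r : ℂ) (hq : q * star q = 1) (hr : r * star r = 1)
    (P Q : Matrix (Fin 2) (Fin 2) ℂ) (hP : P = !![0, q; -star q, 0])
    (hQ : Q = !![0, r; -star r, 0]) (f g : ι → Fin 2)
    (h : ∀ A B : Matrix (Fin 2) (Fin 2) ℂ, A.trace = 0 →
      ∑ s, (w s : ℂ) * margin N (P ^ (f s : ℕ) * A * (P ^ (f s : ℕ))ᴴ)
        (Q ^ (g s : ℕ) * B * (Q ^ (g s : ℕ))ᴴ) = 0) :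
    q ^ 2 = -r ^ 2 := by
  subst hP hQ
  have hnorm : ∀ z : ℂ, z * star z = 1 → ‖z ^ 2‖ = 1 := by
    intro z hz
    have := congrArg norm hz
    rw [norm_mul, norm_star, norm_one] at this
    rw [norm_pow, pow_two, this]
  refine opposite_of_sum w hw f _ _ (hnorm q hq) (hnorm r hr) ?_
  have h1 := h !![0, 1; 0, 0] !![0, 0; 1, 0] (by simp [Matrix.trace_fin_two])
  have h2 := h !![0, 1; 0, 0] !![0, 1; 0, 0] (by simp [Matrix.trace_fin_two])
  -- scaling the two relations by phases makes the contribution of `s` depend on `f s` alone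
  have h3 := congrArg₂ (fun x y => q ^ 2 * x - q ^ 2 * r ^ 2 * y) h1 h2
  simp only [mul_zero, sub_zero] at h3
  refine Eq.trans ?_ h3
  rw [Finset.mul_sum, Finset.mul_sum, ← Finset.sum_sub_distrib]
  refine Finset.sum_congr rfl fun s _ => ?_
  have hf : f s = 0 ∨ f s = 1 := by omega
  have hg : g s = 0 ∨ g s = 1 := by omega
  have hq2 : q ^ 2 * star q ^ 2 = 1 := by rw [← mul_pow, hq, one_pow]
  have hr2 : r ^ 2 * star r ^ 2 = 1 := by rw [← mul_pow, hr, one_pow]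
  rcases hf with hf | hf <;> rcases hg with hg | hg <;>
    simp [hf, hg, margin, Matrix.mul_apply, Fin.sum_univ_two, Matrix.conjTranspose_apply] <;>
    simp only [Complex.star_def] at hq2 hr2
  · ring
  · linear_combination (-(w s : ℂ) * q ^ 2) * hr2
  · linear_combination (-(w s : ℂ) * r ^ 2) * hq2
  · linear_combination (-(w s : ℂ) * r ^ 2) * hq2

theorem wN_at_most_two_single_bit_nodes (N : ℕ) (hN : 4 ≤ N) :
    ¬ ∃ U : Matrix (Fin N → Fin 2) (Fin N → Fin 2) ℂ,
      U ∈ Matrix.specialUnitaryGroup (Fin N → Fin 2) ℂ ∧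
      ∃ P₁ P₂ P₃ : Matrix (Fin 2) (Fin 2) ℂ,
        P₁ ∈ Matrix.specialUnitaryGroup (Fin 2) ℂ ∧
        P₂ ∈ Matrix.specialUnitaryGroup (Fin 2) ℂ ∧
        P₃ ∈ Matrix.specialUnitaryGroup (Fin 2) ℂ ∧
        ∃ f₁ f₂ f₃ : (Fin N → Fin 2) → Fin 2,
          ∀ s : Fin N → Fin 2, ∃ R : Fin N → Matrix (Fin 2) (Fin 2) ℂ,
            (∀ k : Fin N,
              ((k : ℕ) = 0 → R k = P₁ ^ (f₁ s : ℕ)) ∧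
              ((k : ℕ) = 1 → R k = P₂ ^ (f₂ s : ℕ)) ∧
              ((k : ℕ) = 2 → R k = P₃ ^ (f₃ s : ℕ)) ∧
              (3 ≤ (k : ℕ) → R k ∈ Matrix.unitaryGroup (Fin 2) ℂ)) ∧
            ∃ c : ℂ, c ≠ 0 ∧
              (tpow R).mulVec (Uᵀ.mulVec (ketN s)) = c • wState N := by
  rintro ⟨U, hU, P₁, P₂, P₃, hP₁, hP₂, hP₃, f₁, f₂, f₃, H⟩
  choose R hR c hc hW using H
  have hU' := (Matrix.mem_specialUnitaryGroup_iff.1 hU).1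
  have hu : ∀ {P : Matrix (Fin 2) (Fin 2) ℂ}, P ∈ Matrix.specialUnitaryGroup (Fin 2) ℂ →
      ∀ n : ℕ, P ^ n ∈ Matrix.unitaryGroup (Fin 2) ℂ :=
    fun hP n => pow_mem (Matrix.mem_specialUnitaryGroup_iff.1 hP).1 n
  have hRu : ∀ s k, R s k ∈ Matrix.unitaryGroup (Fin 2) ℂ := by
    intro s k
    obtain ⟨h0, h1, h2, h3⟩ := hR s k
    have hk : (k : ℕ) = 0 ∨ (k : ℕ) = 1 ∨ (k : ℕ) = 2 ∨ 3 ≤ (k : ℕ) := by omega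
    rcases hk with hk | hk | hk | hk
    · rw [h0 hk]; exact hu hP₁ _
    · rw [h1 hk]; exact hu hP₂ _
    · rw [h2 hk]; exact hu hP₃ _
    · exact h3 hk
  let w : (Fin N → Fin 2) → ℝ := fun s => ‖c s‖ ^ 2
  have hw : ∀ s, 0 < w s := fun s => pow_pos (norm_pos_iff.2 (hc s)) 2
  let i₁ : Fin N := ⟨0, by omega⟩
  let i₂ : Fin N := ⟨1, by omega⟩
  let i₃ : Fin N := ⟨2, by omega⟩
  have n12 : i₁ ≠ i₂ := by simp [i₁, i₂]
  have n13 : i₁ ≠ i₃ := by simp [i₁, i₃]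
  have n23 : i₂ ≠ i₃ := by simp [i₂, i₃]
  have r1 : ∀ s, R s i₁ = P₁ ^ (f₁ s : ℕ) := fun s => (hR s i₁).1 rfl
  have r2 : ∀ s, R s i₂ = P₂ ^ (f₂ s : ℕ) := fun s => (hR s i₂).2.1 rfl
  have r3 : ∀ s, R s i₃ = P₃ ^ (f₃ s : ℕ) := fun s => (hR s i₃).2.2.1 rfl
  have M {i j : Fin N} (hij : i ≠ j) (A B : Matrix (Fin 2) (Fin 2) ℂ) (hA : A.trace = 0) :=
    sum_margin hN U hU' R hRu c hW hij A B hA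
  have M1 {i j : Fin N} (hij : i ≠ j) (A : Matrix (Fin 2) (Fin 2) ℂ) (hA : A.trace = 0) :
      ∑ s, (w s : ℂ) * margin N (R s i * A * (R s i)ᴴ) 1 = 0 := by
    have h1 : ∀ s, R s j * 1 * (R s j)ᴴ = 1 := fun s => by
      rw [mul_one]; exact Matrix.mem_unitaryGroup_iff.1 (hRu s j)
    simpa only [h1] using M hij A 1 hA
  obtain ⟨q₁, hq₁, hn₁⟩ := flip_of_margin hN w hw P₁ hP₁ f₁
    (fun A hA => by simpa only [r1] using M1 n12 A hA)
  obtain ⟨q₂, hq₂, hn₂⟩ := flip_of_margin hN w hw P₂ hP₂ f₂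
    (fun A hA => by simpa only [r2] using M1 n23 A hA)
  obtain ⟨q₃, hq₃, hn₃⟩ := flip_of_margin hN w hw P₃ hP₃ f₃
    (fun A hA => by simpa only [r3] using M1 n13.symm A hA)
  have e12 := phases_opposite (N := N) w hw q₁ q₂ hn₁ hn₂ P₁ P₂ hq₁ hq₂ f₁ f₂
    (fun A B hA => by simpa only [r1, r2] using M n12 A B hA)
  have e13 := phases_opposite (N := N) w hw q₁ q₃ hn₁ hn₃ P₁ P₃ hq₁ hq₃ f₁ f₃
    (fun A B hA => by simpa only [r1, r3] using M n13 A B hA)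
  have e23 := phases_opposite (N := N) w hw q₂ q₃ hn₂ hn₃ P₂ P₃ hq₂ hq₃ f₂ f₃
    (fun A B hA => by simpa only [r2, r3] using M n23 A B hA)
  -- three numbers that are pairwise opposite vanish, but `|q₁| = 1`
  have hz : q₁ ^ 2 = 0 := by linear_combination (e12 + e13 - e23) / 2
  have hz' : q₁ = 0 := by simpa using hz
  simp [hz'] at hn₁
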